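/- No-clipping residual bound for the noisy iterative Hessian sketch (Lemma F.7): Let Y ∈ ℝⁿ and X ∈ ℝ^{n×d} with every row of X having Euclidean norm at most 1 and with M := XᵀX positive definite; let κ := λ_max(M)/λ_min(M). Let χ ∈ (0,1] satisfy χ·√κ/(2 − χ) < 1, let k, T ∈ ℕ with T ≥ 1, ϱ ∈ (0,1], σ ≥ 0, and set V := √(2d) + √(4·log(8T/ϱ)). Suppose B₀,…,B_{T−1} ∈ ℝ^{k×n} are each a χ-embedding sketch for X, and v₀,…,v_{T−1} ∈ ℝ^d satisfy ‖v_t‖ ≤ V for all t. Define θ̂₀ := 0 and θ̂_{t+1} := θ̂_t + ((1/k)·(B_tX)ᵀ(B_tX))⁻¹ · ( Xᵀ(Y − Xθ̂_t) + σ·v_t ). Then, with θ* := (XᵀX)⁻¹XᵀY, for every t ∈ {0,…,T}: ‖Y − Xθ̂_t‖_∞ ≤ ‖Y‖_∞ + (1 + (χ√κ/(2 − χ))^t)·‖θ*‖ + (2σ/(2 − χ(1 + √κ))) · V/λ_min(M). -/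

import Mathlib

/-!
Write `M = XᵀX`, `Nₜ = (1/k) (BₜX)ᵀ(BₜX)`, `θ* = M⁻¹XᵀY` and `eₜ = θₜ - θ*`. Since `XᵀY = Mθ*`, the
recursion reads `Nₜ eₜ₊₁ = (Nₜ - M) eₜ + σ vₜ`. Pairing this with `eₜ₊₁`, and using the first
embedding property once to bound `Nₜ ⪰ (1 - χ/2) M` from below and once to bound `Nₜ - M`, gives
`(1 - χ/2) ‖X eₜ₊₁‖² ≤ (χ/2) ‖X eₜ₊₁‖ ‖X eₜ‖ + σ ‖eₜ₊₁‖ ‖vₜ‖`.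
Comparing `‖X ·‖` with `‖·‖` by the extreme eigenvalues of `M` turns this into the contraction
`‖eₜ₊₁‖ ≤ r ‖eₜ‖ + c` with `r = χ√κ/(2 - χ)` and `c = 2σV/((2 - χ) λ_min)` (`error_step`). Hence
`‖eₜ‖ ≤ rᵗ ‖θ*‖ + c/(1 - r)`, and the residual bound follows by Cauchy–Schwarz on each row of `X`.
-/


open Matrix

noncomputable def norm2 {ι : Type*} [Fintype ι] (v : ι → ℝ) : ℝ :=
  Real.sqrt (∑ i, v i ^ 2)

/-- Smallest eigenvalue of a Hermitian (symmetric) real matrix; junk value `0` otherwise. -/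
noncomputable def lambdaMin {d : ℕ} (A : Matrix (Fin d) (Fin d) ℝ) : ℝ :=
  @dite _ A.IsHermitian (Classical.dec _) (fun h => ⨅ i, h.eigenvalues i) (fun _ => 0)

/-- Largest eigenvalue of a Hermitian (symmetric) real matrix; junk value `0` otherwise. -/
noncomputable def lambdaMax {d : ℕ} (A : Matrix (Fin d) (Fin d) ℝ) : ℝ :=
  @dite _ A.IsHermitian (Classical.dec _) (fun h => ⨆ i, h.eigenvalues i) (fun _ => 0)

/-- `S` is a `χ`-embedding sketch for `A`. -/
def IsEmbeddingSketch {n d k : ℕ} (χ : ℝ) (A : Matrix (Fin n) (Fin d) ℝ)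
    (S : Matrix (Fin k) (Fin n) ℝ) : Prop :=
  (∀ u v : Fin d → ℝ,
      |u ⬝ᵥ (Aᵀ * ((1 / (k : ℝ)) • (Sᵀ * S) - 1) * A).mulVec v| ≤
        (χ / 2) * norm2 (A.mulVec u) * norm2 (A.mulVec v)) ∧
  (∀ v : Fin d → ℝ,
      (1 - χ) * (k : ℝ) * norm2 (A.mulVec v) ^ 2 ≤ norm2 ((S * A).mulVec v) ^ 2)

lemma norm2_eq_norm {ι : Type*} [Fintype ι] (v : ι → ℝ) : norm2 v = ‖WithLp.toLp 2 v‖ := by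
  simp [norm2, EuclideanSpace.norm_eq]

lemma norm2_nonneg {ι : Type*} [Fintype ι] (v : ι → ℝ) : 0 ≤ norm2 v := Real.sqrt_nonneg _

lemma norm2_sq {ι : Type*} [Fintype ι] (v : ι → ℝ) : norm2 v ^ 2 = v ⬝ᵥ v := by
  rw [norm2, Real.sq_sqrt (Finset.sum_nonneg fun i _ => sq_nonneg _)]
  simp [dotProduct, sq]

lemma norm2_add_le {ι : Type*} [Fintype ι] (v w : ι → ℝ) : norm2 (v + w) ≤ norm2 v + norm2 w := by
  simp only [norm2_eq_norm, WithLp.toLp_add]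
  exact norm_add_le _ _

lemma abs_dotProduct_le {ι : Type*} [Fintype ι] (v w : ι → ℝ) :
    |v ⬝ᵥ w| ≤ norm2 v * norm2 w := by
  have h := abs_real_inner_le_norm (WithLp.toLp 2 w) (WithLp.toLp 2 v)
  rw [EuclideanSpace.inner_toLp_toLp] at h
  simpa [norm2_eq_norm, mul_comm] using h

lemma norm2_mulVec_sq {n d : ℕ} (X : Matrix (Fin n) (Fin d) ℝ) (v : Fin d → ℝ) :
    norm2 (X *ᵥ v) ^ 2 = v ⬝ᵥ (Xᵀ * X) *ᵥ v := by
  rw [norm2_sq, ← mulVec_mulVec, dotProduct_mulVec v, vecMul_transpose]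

/-- Expansion of a quadratic form in an orthonormal eigenbasis. -/
lemma exists_quadForm_eq_sum {d : ℕ} {A : Matrix (Fin d) (Fin d) ℝ} (hA : A.IsHermitian)
    (v : Fin d → ℝ) : ∃ c : Fin d → ℝ, v ⬝ᵥ A *ᵥ v = ∑ i, hA.eigenvalues i * c i ^ 2 ∧
      norm2 v ^ 2 = ∑ i, c i ^ 2 := by
  let b := hA.eigenvectorBasis
  have key : ∀ w : Fin d → ℝ, v ⬝ᵥ w = ∑ i, (v ⬝ᵥ (b i).ofLp) * ((b i).ofLp ⬝ᵥ w) := by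
    intro w
    have h := b.sum_inner_mul_inner (WithLp.toLp 2 v) (WithLp.toLp 2 w)
    simp only [EuclideanSpace.inner_eq_star_dotProduct, star_trivial] at h
    rw [dotProduct_comm, ← h]
    exact Finset.sum_congr rfl fun i _ => by
      rw [dotProduct_comm v, dotProduct_comm w]
  refine ⟨fun i => v ⬝ᵥ (b i).ofLp, ?_, ?_⟩
  · rw [key]
    refine Finset.sum_congr rfl fun i _ => ?_
    have hT : Aᵀ = A := by simpa [conjTranspose_eq_transpose_of_trivial] using hA.eq
    have h1 : (b i).ofLp ⬝ᵥ A *ᵥ v = hA.eigenvalues i * (v ⬝ᵥ (b i).ofLp) := by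
      rw [dotProduct_mulVec, ← mulVec_transpose, hT, hA.mulVec_eigenvectorBasis i,
        smul_dotProduct, dotProduct_comm]
      rfl
    rw [h1]; ring
  · rw [norm2_sq, key]
    exact Finset.sum_congr rfl fun i _ => by rw [dotProduct_comm (b i).ofLp v]; ring

lemma lambdaMin_mul_le {d : ℕ} {A : Matrix (Fin d) (Fin d) ℝ} (hA : A.IsHermitian)
    (v : Fin d → ℝ) : lambdaMin A * norm2 v ^ 2 ≤ v ⬝ᵥ A *ᵥ v := by
  obtain ⟨c, h1, h2⟩ := exists_quadForm_eq_sum hA v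
  rw [h1, h2, Finset.mul_sum, lambdaMin, dif_pos hA]
  gcongr with i
  exact ciInf_le (Set.finite_range _).bddBelow i

lemma le_lambdaMax_mul {d : ℕ} {A : Matrix (Fin d) (Fin d) ℝ} (hA : A.IsHermitian)
    (v : Fin d → ℝ) : v ⬝ᵥ A *ᵥ v ≤ lambdaMax A * norm2 v ^ 2 := by
  obtain ⟨c, h1, h2⟩ := exists_quadForm_eq_sum hA v
  rw [h1, h2, Finset.mul_sum, lambdaMax, dif_pos hA]
  gcongr with i
  exact le_ciSup (Set.finite_range _).bddAbove i

lemma lambdaMin_nonneg {d : ℕ} {A : Matrix (Fin d) (Fin d) ℝ} (hA : A.PosDef) :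
    0 ≤ lambdaMin A := by
  rw [lambdaMin, dif_pos hA.isHermitian]
  exact Real.iInf_nonneg fun i => (hA.eigenvalues_pos i).le

lemma lambdaMax_nonneg {d : ℕ} {A : Matrix (Fin d) (Fin d) ℝ} (hA : A.PosDef) :
    0 ≤ lambdaMax A := by
  rw [lambdaMax, dif_pos hA.isHermitian]
  exact Real.iSup_nonneg fun i => (hA.eigenvalues_pos i).le

lemma lambdaMin_pos {d : ℕ} [NeZero d] {A : Matrix (Fin d) (Fin d) ℝ} (hA : A.PosDef) :
    0 < lambdaMin A := by
  rw [lambdaMin, dif_pos hA.isHermitian]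
  obtain ⟨i, hi⟩ := exists_eq_ciInf_of_finite (f := hA.isHermitian.eigenvalues)
  rw [← hi]
  exact hA.eigenvalues_pos i

/-- The sketched Gram matrix `(1/k) (SA)ᵀ(SA)`. -/
noncomputable def sketchGram {n d k : ℕ} (A : Matrix (Fin n) (Fin d) ℝ)
    (S : Matrix (Fin k) (Fin n) ℝ) : Matrix (Fin d) (Fin d) ℝ :=
  (1 / (k : ℝ)) • ((S * A)ᵀ * (S * A))

lemma sketchGram_sub {n d k : ℕ} (A : Matrix (Fin n) (Fin d) ℝ) (S : Matrix (Fin k) (Fin n) ℝ) :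
    Aᵀ * ((1 / (k : ℝ)) • (Sᵀ * S) - 1) * A = sketchGram A S - Aᵀ * A := by
  simp only [sketchGram, Matrix.mul_sub, Matrix.sub_mul, Matrix.mul_one, Matrix.mul_smul,
    Matrix.smul_mul, transpose_mul, Matrix.mul_assoc]

/-- An embedding sketch distorts the Gram form by at most a factor `1 - χ/2` from below. -/
lemma le_sketchGram {n d k : ℕ} {χ : ℝ} {A : Matrix (Fin n) (Fin d) ℝ}
    {S : Matrix (Fin k) (Fin n) ℝ} (hS : IsEmbeddingSketch χ A S) (u : Fin d → ℝ) :
    (1 - χ / 2) * norm2 (A *ᵥ u) ^ 2 ≤ u ⬝ᵥ sketchGram A S *ᵥ u := by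
  have h := (abs_le.1 (hS.1 u u)).1
  rw [sketchGram_sub, sub_mulVec, dotProduct_sub, ← norm2_mulVec_sq] at h
  linarith

lemma isUnit_det_sketchGram {n d k : ℕ} {χ : ℝ} (hχ : χ ≤ 1) {A : Matrix (Fin n) (Fin d) ℝ}
    (hA : (Aᵀ * A).PosDef) {S : Matrix (Fin k) (Fin n) ℝ} (hS : IsEmbeddingSketch χ A S) :
    IsUnit (sketchGram A S).det := by
  refine (isUnit_iff_isUnit_det _).1 (mulVec_injective_iff_isUnit.1 ?_)
  refine (injective_iff_map_eq_zero (sketchGram A S).mulVecLin).2 fun u hu => ?_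
  by_contra hne
  have h1 := le_sketchGram hS u
  have h2 := hA.dotProduct_mulVec_pos hne
  rw [star_trivial, ← norm2_mulVec_sq] at h2
  rw [mulVecLin_apply] at hu
  rw [hu, dotProduct_zero] at h1
  nlinarith

/-- The scalar inequality behind the contraction: `p`, `q` are the `M`-norms and `a`, `b` the
Euclidean norms of the new and old error. -/
lemma scalar_step {χ σ l L p q a b w V : ℝ} (hχ0 : 0 < χ) (hχ1 : χ ≤ 1) (hσ : 0 ≤ σ) (hl : 0 < l)
    (hL : 0 ≤ L) (hp : 0 ≤ p) (hq : 0 ≤ q) (ha : 0 ≤ a) (hb : 0 ≤ b) (hwV : w ≤ V) (hV : 0 ≤ V)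
    (hap : l * a ^ 2 ≤ p ^ 2) (hqb : q ^ 2 ≤ L * b ^ 2)
    (h : (1 - χ / 2) * p ^ 2 ≤ χ / 2 * p * q + σ * (a * w)) :
    a ≤ χ * Real.sqrt (L / l) / (2 - χ) * b + 2 * σ / (2 - χ) * (V / l) := by
  set s := Real.sqrt l with hs
  have hs0 : 0 < s := Real.sqrt_pos.2 hl
  have hsl : l = s ^ 2 := (Real.sq_sqrt hl.le).symm
  have hsa : s * a ≤ p := by
    refine abs_le_of_sq_le_sq' ?_ hp |>.2
    rw [mul_pow, ← hsl]; exact hap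
  have hqb' : q ≤ Real.sqrt L * b := by
    refine abs_le_of_sq_le_sq' ?_ (by positivity) |>.2
    rw [mul_pow, Real.sq_sqrt hL]; exact hqb
  have h2 : 0 < 2 - χ := by linarith
  have hmain : (2 - χ) * (s * p) ≤ χ * (s * q) + 2 * σ * V := by
    rcases hp.eq_or_lt with hp0 | hp0
    · rw [← hp0]; simp only [mul_zero]; positivity
    · refine le_of_mul_le_mul_left ?_ hp0
      have e1 : σ * (a * w) ≤ σ * (a * V) := by gcongr
      have e2 : s * a * (σ * V) ≤ p * (σ * V) := by gcongr
      have e3 := mul_le_mul_of_nonneg_left (h.trans (add_le_add_right e1 _)) hs0.le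
      linarith
  rw [Real.sqrt_div hL, ← hs]
  have e4 : (2 - χ) * l * a ≤ χ * (s * (Real.sqrt L * b)) + 2 * σ * V := by
    calc (2 - χ) * l * a = (2 - χ) * (s * (s * a)) := by rw [hsl]; ring
      _ ≤ (2 - χ) * (s * p) := by gcongr
      _ ≤ χ * (s * q) + 2 * σ * V := hmain
      _ ≤ _ := by gcongr
  have e5 : χ * (Real.sqrt L / s) / (2 - χ) * b + 2 * σ / (2 - χ) * (V / l)
      = (χ * (s * (Real.sqrt L * b)) + 2 * σ * V) / ((2 - χ) * l) := by
    rw [hsl]; field_simp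
  rw [e5, le_div_iff₀ (by positivity)]
  linarith

/-- One step of the recursion contracts the Euclidean error, up to the noise term. -/
lemma error_step {n d k : ℕ} {χ σ V : ℝ} (hχ0 : 0 < χ) (hχ1 : χ ≤ 1) (hσ : 0 ≤ σ) (hV : 0 ≤ V)
    {X : Matrix (Fin n) (Fin d) ℝ} (hM : (Xᵀ * X).PosDef) {S : Matrix (Fin k) (Fin n) ℝ}
    (hS : IsEmbeddingSketch χ X S) {w e e' : Fin d → ℝ} (hw : norm2 w ≤ V)
    (he : sketchGram X S *ᵥ e' = (sketchGram X S - Xᵀ * X) *ᵥ e + σ • w) :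
    norm2 e' ≤ χ * Real.sqrt (lambdaMax (Xᵀ * X) / lambdaMin (Xᵀ * X)) / (2 - χ) * norm2 e +
      2 * σ / (2 - χ) * (V / lambdaMin (Xᵀ * X)) := by
  have h2 : 0 < 2 - χ := by linarith
  rcases Nat.eq_zero_or_pos d with rfl | hd
  · have h0 : ∀ u : Fin 0 → ℝ, norm2 u = 0 := fun u => by simp [norm2]
    have := lambdaMin_nonneg hM
    rw [h0, h0]
    positivity
  · have : NeZero d := ⟨hd.ne'⟩
    refine scalar_step hχ0 hχ1 hσ (lambdaMin_pos hM) (lambdaMax_nonneg hM)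
      (norm2_nonneg (X *ᵥ e')) (norm2_nonneg (X *ᵥ e)) (norm2_nonneg _) (norm2_nonneg _) hw hV
      ?_ ?_ ?_
    · rw [norm2_mulVec_sq]; exact lambdaMin_mul_le hM.isHermitian e'
    · rw [norm2_mulVec_sq]; exact le_lambdaMax_mul hM.isHermitian e
    · refine (le_sketchGram hS e').trans ?_
      rw [he, dotProduct_add, dotProduct_smul, smul_eq_mul, ← sketchGram_sub]
      gcongr
      · exact (le_abs_self _).trans (hS.1 e' e)
      · exact (le_abs_self _).trans (abs_dotProduct_le e' w)

theorem stmt15 {n d k : ℕ} (Y : Fin n → ℝ) (X : Matrix (Fin n) (Fin d) ℝ)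
    (hrows : ∀ i : Fin n, norm2 (X i) ≤ 1) (hM : (Xᵀ * X).PosDef)
    (χ : ℝ) (hχ0 : 0 < χ) (hχ1 : χ ≤ 1)
    (T : ℕ) (hT : 1 ≤ T) (ϱ σ : ℝ) (hϱ0 : 0 < ϱ) (hϱ1 : ϱ ≤ 1) (hσ : 0 ≤ σ)
    (hκ : χ * Real.sqrt (lambdaMax (Xᵀ * X) / lambdaMin (Xᵀ * X)) / (2 - χ) < 1)
    (B : Fin T → Matrix (Fin k) (Fin n) ℝ) (hB : ∀ t, IsEmbeddingSketch χ X (B t))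
    (v : Fin T → Fin d → ℝ)
    (hv : ∀ t, norm2 (v t) ≤
      Real.sqrt (2 * (d : ℝ)) + Real.sqrt (4 * Real.log (8 * (T : ℝ) / ϱ)))
    (θ : ℕ → Fin d → ℝ) (hθ0 : θ 0 = 0)
    (hrec : ∀ t : Fin T,
      θ (t.val + 1) = θ t.val + ((1 / (k : ℝ)) • ((B t * X)ᵀ * (B t * X)))⁻¹.mulVec
        (Xᵀ.mulVec (Y - X.mulVec (θ t.val)) + σ • v t)) :
    ∀ t : ℕ, t ≤ T →
      (⨆ i : Fin n, |(Y - X.mulVec (θ t)) i|) ≤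
        (⨆ i : Fin n, |Y i|) +
          (1 + (χ * Real.sqrt (lambdaMax (Xᵀ * X) / lambdaMin (Xᵀ * X)) / (2 - χ)) ^ t) *
            norm2 ((Xᵀ * X)⁻¹.mulVec (Xᵀ.mulVec Y)) +
          (2 * σ / (2 - χ * (1 + Real.sqrt (lambdaMax (Xᵀ * X) / lambdaMin (Xᵀ * X))))) *
            ((Real.sqrt (2 * (d : ℝ)) + Real.sqrt (4 * Real.log (8 * (T : ℝ) / ϱ))) /
              lambdaMin (Xᵀ * X)) := by
  intro t ht
  set V := Real.sqrt (2 * (d : ℝ)) + Real.sqrt (4 * Real.log (8 * (T : ℝ) / ϱ)) with hVdef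
  set l := lambdaMin (Xᵀ * X) with hl
  set s := Real.sqrt (lambdaMax (Xᵀ * X) / l) with hs
  set r := χ * s / (2 - χ) with hr
  set θs := (Xᵀ * X)⁻¹ *ᵥ (Xᵀ *ᵥ Y) with hθs
  have hV : 0 ≤ V := by positivity
  have h2 : 0 < 2 - χ := by linarith
  have hr0 : 0 ≤ r := by positivity
  have hl0 : 0 ≤ l := lambdaMin_nonneg hM
  have h1r : 0 < 1 - r := by linarith
  set C := 2 * σ / (2 - χ * (1 + s)) * (V / l) with hC
  -- `C` is the fixed point of `x ↦ r x + c`, where `c` is the noise term of `error_step`.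
  have hCfix : r * C + 2 * σ / (2 - χ) * (V / l) = C := by
    have e1 : 2 - χ * (1 + s) = (2 - χ) * (1 - r) := by rw [hr]; field_simp; ring
    rw [hC, e1]
    generalize V / l = g
    field_simp
    ring
  have hC0 : 0 ≤ C := by
    have e1 : 2 - χ * (1 + s) = (2 - χ) * (1 - r) := by rw [hr]; field_simp; ring
    rw [hC, e1]
    positivity
  have hMθ : (Xᵀ * X) *ᵥ θs = Xᵀ *ᵥ Y := by
    rw [hθs, mulVec_mulVec, mul_nonsing_inv _ ((isUnit_iff_isUnit_det _).1 hM.isUnit), one_mulVec]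
  clear_value θs
  have herr : ∀ t : ℕ, t ≤ T → norm2 (θ t - θs) ≤ r ^ t * norm2 θs + C := by
    intro t
    induction t with
    | zero =>
      intro _
      have : norm2 (θ 0 - θs) = norm2 θs := by simp [hθ0, norm2]
      rw [this]; linarith
    | succ t ih =>
      intro ht
      have hstep := hrec ⟨t, ht⟩
      set S := B ⟨t, ht⟩
      have hU := isUnit_det_sketchGram hχ1 hM (hB ⟨t, ht⟩)
      have he : sketchGram X S *ᵥ (θ (t + 1) - θs) =
          (sketchGram X S - Xᵀ * X) *ᵥ (θ t - θs) + σ • v ⟨t, ht⟩ := by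
        change θ (t + 1) = θ t + (sketchGram X S)⁻¹ *ᵥ _ at hstep
        rw [hstep, mulVec_sub, mulVec_add, mulVec_mulVec, mul_nonsing_inv _ hU, one_mulVec,
          mulVec_sub, ← hMθ, mulVec_mulVec, sub_mulVec, mulVec_sub, mulVec_sub]
        abel
      have h := error_step hχ0 hχ1 hσ hV hM (hB ⟨t, ht⟩) (hv ⟨t, ht⟩) he
      rw [← hl, ← hs, ← hr] at h
      have h3 := mul_le_mul_of_nonneg_left (ih (by omega)) hr0
      rw [pow_succ]
      linarith
  have hθt : norm2 (θ t) ≤ (1 + r ^ t) * norm2 θs + C := by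
    have h := norm2_add_le θs (θ t - θs)
    rw [add_sub_cancel] at h
    linarith [herr t ht]
  have hY0 : 0 ≤ ⨆ i, |Y i| := Real.iSup_nonneg fun i => abs_nonneg _
  refine Real.iSup_le (fun i => ?_) (by linarith [norm2_nonneg (θ t)])
  have hYi : |Y i| ≤ ⨆ i, |Y i| := le_ciSup (Set.finite_range fun i => |Y i|).bddAbove i
  have hXi : |(X *ᵥ θ t) i| ≤ norm2 (θ t) :=
    (abs_dotProduct_le (X i) (θ t)).trans
      (mul_le_of_le_one_left (norm2_nonneg _) (hrows i))
  have := abs_sub (Y i) ((X *ᵥ θ t) i)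
  rw [Pi.sub_apply]
  linarith
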